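/- arXiv:0911.2171 — 6 statements merged into one kernel-verified Lean document; each statement's English description precedes it below -/
import Mathlib

section
/- Let M be an n×n real Z-matrix. Then the following are equivalent: (a) there exists x ∈ ℝⁿ with x ≥ 0 and Mx > 0; (b) there exists x ∈ ℝⁿ with x > 0 and Mx > 0; (c) M is invertible and every entry of M⁻¹ is nonnegative; (d) for every nonzero x ∈ ℝⁿ there exists an index k with x_k·(Mx)_k > 0; (e) M is a P-matrix. -/
/-!
The conditions, lettered (a) to (e) in the order listed, are linked by
(a) → (b) → (d) → (c) → (a) and (d) ↔ (e).

The cycle rests on a comparison principle for Z-matrices, `IsZMatrix.mulVec_le_of_le`: if `x ≤ d`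
with equality in position `k`, then `(M d) k ≤ (M x) k`. It gives (b) → (d) by comparing `x` with
the multiple of the positive vector `d` that touches it from above, and (d) → (c) by comparing
the negative part of `x` with `-x`, which shows that `M x ≥ 0` forces `x ≥ 0`.

The equivalence (d) ↔ (e) holds for all real matrices. For (d) → (e), deform `M` linearly to the
identity: condition (d) persists and keeps all principal minors nonzero. For (e) → (d), a vector
violating (d) lies in the kernel of a principal submatrix of `M` plus a nonnegative diagonal,
whereas such a sum has positive determinant. Principal submatrices are handled as full-size
matrices through `principalPad`.
-/

/-- A matrix is a Z-matrix if all its off-diagonal entries are nonpositive. -/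
def IsZMatrix {n : ℕ} (M : Matrix (Fin n) (Fin n) ℝ) : Prop :=
  ∀ i j, i ≠ j → M i j ≤ 0

/-- A matrix is a P-matrix if all its principal minors are positive. -/
def IsPMatrix {n : ℕ} (M : Matrix (Fin n) (Fin n) ℝ) : Prop :=
  ∀ s : Finset (Fin n), s.Nonempty →
    0 < (M.submatrix (fun i : s => (i : Fin n)) (fun j : s => (j : Fin n))).det

/-- The matrix `A` with every row outside `s` replaced by the corresponding row of the identity.
Its determinant is the principal minor of `A` on `s`. -/
def principalPad {n : ℕ} (s : Finset (Fin n)) (A : Matrix (Fin n) (Fin n) ℝ) :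
    Matrix (Fin n) (Fin n) ℝ :=
  fun i j => if i ∈ s then A i j else (1 : Matrix (Fin n) (Fin n) ℝ) i j

theorem det_principalPad {n : ℕ} (s : Finset (Fin n)) (A : Matrix (Fin n) (Fin n) ℝ) :
    (principalPad s A).det =
      (A.submatrix (fun i : s => (i : Fin n)) (fun j : s => (j : Fin n))).det := by
  rw [Matrix.twoBlockTriangular_det (principalPad s A) (fun i => i ∈ s)]
  · have h1 : (principalPad s A).toSquareBlockProp (fun i => ¬ i ∈ s) = 1 := by
      ext i j
      simp [principalPad, Matrix.toSquareBlockProp, i.2, Matrix.one_apply, Subtype.ext_iff]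
    have h2 : (principalPad s A).toSquareBlockProp (fun i => i ∈ s) =
        A.submatrix (fun i : s => (i : Fin n)) (fun j : s => (j : Fin n)) := by
      ext i j
      have hi : (i : Fin n) ∈ s := i.2
      simp [principalPad, Matrix.toSquareBlockProp, hi]
    rw [h1, h2, Matrix.det_one, mul_one]
    congr!
  · intro i hi j hj
    have : i ≠ j := by rintro rfl; exact hi hj
    simp [principalPad, hi, this]

theorem principalPad_mulVec_of_mem {n : ℕ} {s : Finset (Fin n)} (A : Matrix (Fin n) (Fin n) ℝ)
    (x : Fin n → ℝ) {k : Fin n} (hk : k ∈ s) :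
    (principalPad s A).mulVec x k = A.mulVec x k := by
  simp [Matrix.mulVec, dotProduct, principalPad, hk]

theorem principalPad_mulVec_of_notMem {n : ℕ} {s : Finset (Fin n)}
    (A : Matrix (Fin n) (Fin n) ℝ) (x : Fin n → ℝ) {k : Fin n} (hk : k ∉ s) :
    (principalPad s A).mulVec x k = x k := by
  simp [Matrix.mulVec, dotProduct, principalPad, hk, Matrix.one_apply]

/-- Adding a nonnegative diagonal preserves positivity of all principal minors. The diagonal is
added one entry at a time: by linearity of the determinant in row `a`, adding `d a` there changes
the minor on `s` by `d a` times the minor on `s.erase a`. -/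
theorem det_principalPad_add_diagonal_pos {n : ℕ} {A : Matrix (Fin n) (Fin n) ℝ}
    (hA : ∀ s, 0 < (principalPad s A).det) {d : Fin n → ℝ} (hd : ∀ i, 0 ≤ d i)
    (T : Finset (Fin n)) :
    ∀ s, 0 < (principalPad s (A + Matrix.diagonal fun i => if i ∈ T then d i else 0)).det := by
  induction T using Finset.induction_on with
  | empty => simpa using hA
  | insert a T ha ih =>
    intro s
    set B := A + Matrix.diagonal fun i => if i ∈ T then d i else 0 with hB
    set B' := A + Matrix.diagonal fun i => if i ∈ insert a T then d i else 0 with hB'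
    have hrow : ∀ i j, i ≠ a → B' i j = B i j := by
      intro i j hi
      simp [hB, hB', Matrix.diagonal_apply, hi]
    by_cases has : a ∈ s
    · have e1 : principalPad s B' =
          (principalPad s B).updateRow a (principalPad s B a + d a • Pi.single a 1) := by
        ext i j
        by_cases hi : i = a
        · subst hi
          simp [principalPad, has, hB, hB', Matrix.diagonal_apply, ha, Pi.single_apply, eq_comm]
        · simp [principalPad, hi, hrow i j hi]
      have e2 : (principalPad s B).updateRow a (Pi.single a 1) = principalPad (s.erase a) B := by
        ext i j
        by_cases hi : i = a
        · subst hi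
          simp [principalPad, Matrix.one_apply, Pi.single_apply, eq_comm]
        · simp [principalPad, hi]
      rw [e1, Matrix.det_updateRow_add, Matrix.det_updateRow_smul, e2, Matrix.updateRow_eq_self]
      exact add_pos_of_pos_of_nonneg (ih s) (mul_nonneg (hd a) (ih _).le)
    · have e : principalPad s B' = principalPad s B := by
        ext i j
        by_cases hi : i = a
        · simp [principalPad, hi, has]
        · simp [principalPad, hrow i j hi]
      rw [e]
      exact ih s

/-- A matrix that weakly reverses the sign of no nonzero vector is a P-matrix: the segment from
the identity to `M` consists of such matrices, so along it no principal minor vanishes, and each keeps the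
sign it has at the identity. -/
theorem isPMatrix_of_not_reverses_sign {n : ℕ} {M : Matrix (Fin n) (Fin n) ℝ}
    (h : ∀ x : Fin n → ℝ, x ≠ 0 → ∃ k, 0 < x k * M.mulVec x k) : IsPMatrix M := by
  intro s _
  rw [← det_principalPad]
  set F : ℝ → Matrix (Fin n) (Fin n) ℝ :=
    fun t => principalPad s ((1 - t) • (1 : Matrix (Fin n) (Fin n) ℝ) + t • M) with hF
  have hcont : Continuous fun t => (F t).det := by
    refine Continuous.matrix_det (continuous_matrix fun i j => ?_)
    by_cases hi : i ∈ s
    · simp only [hF, principalPad, hi, if_true, Matrix.add_apply, Matrix.smul_apply]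
      fun_prop
    · simp only [hF, principalPad, hi, if_false]
      fun_prop
  have hne : ∀ t ∈ Set.Icc (0 : ℝ) 1, (F t).det ≠ 0 := by
    intro t ht h0
    obtain ⟨x, hx, hx0⟩ := Matrix.exists_mulVec_eq_zero_iff.mpr h0
    obtain ⟨k, hk⟩ := h x hx
    have hxk : x k ≠ 0 := by rintro h0; simp [h0] at hk
    have hFk : (F t).mulVec x k = 0 := by rw [hx0]; rfl
    have hks : k ∈ s := by
      by_contra hks
      exact hxk (by rwa [hF, principalPad_mulVec_of_notMem _ _ hks] at hFk)
    rw [hF, principalPad_mulVec_of_mem _ _ hks] at hFk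
    simp only [Matrix.add_mulVec, Matrix.smul_mulVec, Matrix.one_mulVec, Pi.add_apply,
      Pi.smul_apply, smul_eq_mul] at hFk
    have hsq : 0 < x k * x k := mul_self_pos.mpr hxk
    have hsum : (1 - t) * (x k * x k) + t * (x k * M.mulVec x k) = 0 := by
      linear_combination x k * hFk
    rcases ht.1.eq_or_lt with rfl | ht0
    · simp at hsum; exact hxk hsum
    · nlinarith [mul_pos ht0 hk, mul_nonneg (sub_nonneg.mpr ht.2) hsq.le]
  have hF0 : (F 0).det = 1 := by
    have : F 0 = 1 := by ext i j; simp [hF, principalPad]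
    rw [this, Matrix.det_one]
  have hF1 : F 1 = principalPad s M := by simp [hF]
  rw [← hF1]
  by_contra hneg
  obtain ⟨t, ht, ht0⟩ := intermediate_value_Icc' zero_le_one hcont.continuousOn
    (show (0 : ℝ) ∈ Set.Icc (F 1).det (F 0).det from ⟨not_lt.mp hneg, by rw [hF0]; norm_num⟩)
  exact hne t ht ht0

/-- A P-matrix weakly reverses the sign of no `x ≠ 0`: otherwise, for the nonnegative `d` equal
to `-(M x) / x` on the support `s` of `x` and to `0` elsewhere, the principal submatrix of
`M + diagonal d` on `s` would kill `x`. -/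
theorem IsPMatrix.not_reverses_sign {n : ℕ} {M : Matrix (Fin n) (Fin n) ℝ} (hM : IsPMatrix M)
    (x : Fin n → ℝ) (hx : x ≠ 0) : ∃ k, 0 < x k * M.mulVec x k := by
  by_contra! hcon
  have hpos : ∀ s, 0 < (principalPad s M).det := by
    intro s
    rw [det_principalPad]
    rcases s.eq_empty_or_nonempty with rfl | hs
    · simp
    · exact hM s hs
  -- Off the support of `x` the quotient is `0` by the convention for division by zero.
  set d : Fin n → ℝ := fun k => -(M.mulVec x k) / x k with hd
  have hd0 : ∀ k, 0 ≤ d k := by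
    intro k
    by_cases hk : x k = 0
    · simp [hd, hk]
    · have : d k = -(x k * M.mulVec x k) / (x k * x k) := by
        simp only [hd]; field_simp
      rw [this]
      exact div_nonneg (neg_nonneg.mpr (hcon k)) (mul_self_nonneg _)
  have hdet := det_principalPad_add_diagonal_pos hpos hd0 Finset.univ
    (Finset.univ.filter fun k => x k ≠ 0)
  refine hdet.ne' (Matrix.exists_mulVec_eq_zero_iff.mp ⟨x, hx, ?_⟩)
  ext k
  by_cases hk : x k = 0
  · rw [principalPad_mulVec_of_notMem _ _ (by simp [hk])]
    simpa using hk
  · rw [principalPad_mulVec_of_mem _ _ (by simp [hk])]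
    simp [Matrix.add_mulVec, Matrix.mulVec_diagonal, hd, div_mul_cancel₀ _ hk]

theorem IsZMatrix.pos_of_mulVec_pos {n : ℕ} {M : Matrix (Fin n) (Fin n) ℝ} (hZ : IsZMatrix M)
    {x : Fin n → ℝ} (hx : ∀ i, 0 ≤ x i) (hMx : ∀ i, 0 < M.mulVec x i) (i : Fin n) : 0 < x i := by
  refine (hx i).lt_of_ne' fun hi => (hMx i).not_ge ?_
  change ∑ j, M i j * x j ≤ 0
  refine Finset.sum_nonpos fun j _ => ?_
  by_cases hij : i = j
  · simp [← hij, hi]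
  · exact mul_nonpos_of_nonpos_of_nonneg (hZ i j hij) (hx j)

/-- Comparison principle: if `d - x` is nonnegative with a zero in position `k`, then
`(M x) k ≥ (M d) k`. -/
theorem IsZMatrix.mulVec_le_of_le {n : ℕ} {M : Matrix (Fin n) (Fin n) ℝ} (hZ : IsZMatrix M)
    {x d : Fin n → ℝ} (hxd : ∀ i, x i ≤ d i) {k : Fin n} (hk : x k = d k) :
    M.mulVec d k ≤ M.mulVec x k := by
  change ∑ j, M k j * d j ≤ ∑ j, M k j * x j
  refine Finset.sum_le_sum fun j _ => ?_
  by_cases hkj : k = j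
  · simp [← hkj, hk]
  · exact mul_le_mul_of_nonpos_left (hxd j) (hZ k j hkj)

/-- For a positive `d` with `M d > 0`: a vector that is somewhere positive has a positive entry
at which `M x` is positive too, namely where `x i / d i` is largest. -/
theorem IsZMatrix.exists_pos_of_pos {n : ℕ} {M : Matrix (Fin n) (Fin n) ℝ} (hZ : IsZMatrix M)
    {d : Fin n → ℝ} (hd : ∀ i, 0 < d i) (hMd : ∀ i, 0 < M.mulVec d i)
    {x : Fin n → ℝ} {i : Fin n} (hi : 0 < x i) : ∃ k, 0 < x k ∧ 0 < M.mulVec x k := by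
  have : Nonempty (Fin n) := ⟨i⟩
  obtain ⟨k, hk⟩ := Finite.exists_max fun j => x j / d j
  have ht : 0 < x k / d k := (div_pos hi (hd i)).trans_le (hk i)
  refine ⟨k, (div_pos_iff_of_pos_right (hd k)).mp ht, ?_⟩
  have h := hZ.mulVec_le_of_le (x := x) (d := (x k / d k) • d) (k := k)
    (fun j => (div_le_iff₀ (hd j)).mp (hk j)) (by simp [(hd k).ne'])
  rw [Matrix.mulVec_smul] at h
  exact (mul_pos ht (hMd k)).trans_le h

theorem IsZMatrix.nonneg_of_mulVec_nonneg {n : ℕ} {M : Matrix (Fin n) (Fin n) ℝ}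
    (hZ : IsZMatrix M) (h : ∀ x : Fin n → ℝ, x ≠ 0 → ∃ k, 0 < x k * M.mulVec x k)
    {x : Fin n → ℝ} (hMx : ∀ i, 0 ≤ M.mulVec x i) (i : Fin n) : 0 ≤ x i := by
  by_contra! hi
  -- The negative part of `x` is a nonzero vector whose sign `M` weakly reverses.
  set y : Fin n → ℝ := fun j => max (-x j) 0 with hy
  have hy0 : y ≠ 0 := by
    intro h0
    have := congrFun h0 i
    simp only [hy, Pi.zero_apply, max_eq_right_iff] at this
    linarith
  obtain ⟨k, hk⟩ := h y hy0
  rcases lt_or_ge (x k) 0 with hxk | hxk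
  · have hle := hZ.mulVec_le_of_le (x := -x) (d := y) (k := k) (fun j => le_max_left _ _)
      (max_eq_left (neg_nonneg.mpr hxk.le)).symm
    rw [Matrix.mulVec_neg] at hle
    exact hk.not_ge (mul_nonpos_of_nonneg_of_nonpos (le_max_right _ _)
      (hle.trans (neg_nonpos.mpr (hMx k))))
  · have : y k = 0 := max_eq_right (neg_nonpos.mpr hxk)
    simp [this] at hk

/-- Fiedler–Pták: equivalent characterizations of K-matrices among Z-matrices. -/
theorem zmatrix_tfae {n : ℕ} (M : Matrix (Fin n) (Fin n) ℝ) (hZ : IsZMatrix M) :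
    List.TFAE
      [ (∃ x : Fin n → ℝ, (∀ i, 0 ≤ x i) ∧ ∀ i, 0 < M.mulVec x i),
        (∃ x : Fin n → ℝ, (∀ i, 0 < x i) ∧ ∀ i, 0 < M.mulVec x i),
        (IsUnit M ∧ ∀ i j, 0 ≤ M⁻¹ i j),
        (∀ x : Fin n → ℝ, x ≠ 0 → ∃ k, 0 < x k * M.mulVec x k),
        IsPMatrix M ] := by
  tfae_have 1 → 2 := fun ⟨x, hx, hMx⟩ => ⟨x, hZ.pos_of_mulVec_pos hx hMx, hMx⟩
  tfae_have 2 → 4 := by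
    rintro ⟨d, hd, hMd⟩ x hx
    obtain ⟨i, hi⟩ := Function.ne_iff.mp hx
    rcases lt_or_gt_of_ne hi with hi | hi
    · obtain ⟨k, hk, hMk⟩ := hZ.exists_pos_of_pos hd hMd (x := -x) (neg_pos.mpr hi)
      refine ⟨k, ?_⟩
      have h := mul_pos hk hMk
      simpa [Matrix.mulVec_neg] using h
    · obtain ⟨k, hk, hMk⟩ := hZ.exists_pos_of_pos hd hMd hi
      exact ⟨k, mul_pos hk hMk⟩
  tfae_have 4 → 3 := by
    intro h
    have hdet : M.det ≠ 0 := by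
      intro h0
      obtain ⟨x, hx, hx0⟩ := Matrix.exists_mulVec_eq_zero_iff.mpr h0
      obtain ⟨k, hk⟩ := h x hx
      simp [hx0] at hk
    have hunit : IsUnit M.det := isUnit_iff_ne_zero.mpr hdet
    refine ⟨(Matrix.isUnit_iff_isUnit_det M).mpr hunit, fun i j => ?_⟩
    have hcol : M.mulVec (M⁻¹.mulVec (Pi.single j 1)) = Pi.single j 1 := by
      rw [Matrix.mulVec_mulVec, Matrix.mul_nonsing_inv M hunit, Matrix.one_mulVec]
    have hnn := hZ.nonneg_of_mulVec_nonneg h (x := M⁻¹.mulVec (Pi.single j 1))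
      (fun k => by rw [hcol]; exact (Pi.single_nonneg.mpr zero_le_one : (0 : Fin n → ℝ) ≤ _) k) i
    simpa using hnn
  tfae_have 3 → 1 := by
    rintro ⟨hM, hinv⟩
    refine ⟨M⁻¹.mulVec 1, fun i => ?_, fun i => ?_⟩
    · change 0 ≤ ∑ j, M⁻¹ i j * 1
      exact Finset.sum_nonneg fun j _ => mul_nonneg (hinv i j) zero_le_one
    rw [Matrix.mulVec_mulVec, Matrix.mul_nonsing_inv M ((Matrix.isUnit_iff_isUnit_det M).mp hM),
      Matrix.one_mulVec]
    exact one_pos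
  tfae_have 4 → 5 := isPMatrix_of_not_reverses_sign
  tfae_have 5 → 4 := IsPMatrix.not_reverses_sign
  tfae_finish
end

section
/- An n×n real matrix M is a P-matrix if and only if there is no nonzero x ∈ ℝⁿ such that x_k·(Mx)_k ≤ 0 for every index k. -/
open Matrix

/-- The matrix whose rows in `s` are those of `M` and whose other rows are those of the identity. -/
def rowPiecewise {n : ℕ} (M : Matrix (Fin n) (Fin n) ℝ) (s : Finset (Fin n)) :
    Matrix (Fin n) (Fin n) ℝ :=
  Matrix.of fun i j => if i ∈ s then M i j else (1 : Matrix (Fin n) (Fin n) ℝ) i j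

theorem det_rowPiecewise {n : ℕ} (M : Matrix (Fin n) (Fin n) ℝ) (s : Finset (Fin n)) :
    (rowPiecewise M s).det =
      (M.submatrix (fun i : s => (i : Fin n)) (fun j : s => (j : Fin n))).det := by
  rw [Matrix.twoBlockTriangular_det _ (fun i => i ∈ s)]
  · have h1 : Matrix.toSquareBlockProp (rowPiecewise M s) (fun i => ¬ i ∈ s) = 1 := by
      ext i j
      simp [Matrix.toSquareBlockProp, rowPiecewise, i.2, Matrix.one_apply, Subtype.ext_iff]
    rw [h1, Matrix.det_one, mul_one]
    have h2 : Matrix.toSquareBlockProp (rowPiecewise M s) (fun i => i ∈ s) =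
        M.submatrix (fun i : s => (i : Fin n)) (fun j : s => (j : Fin n)) := by
      ext i j
      have hi : (i : Fin n) ∈ s := i.2
      simp [Matrix.toSquareBlockProp, rowPiecewise, hi]
    rw [h2]
    -- The two sides differ only in the `Fintype` instance on the subtype.
    convert rfl
  · intro i hi j hj
    have hij : i ≠ j := fun h => hi (h ▸ hj)
    simp [rowPiecewise, hi, Matrix.one_apply, hij]

/-- Multilinear expansion writes this determinant as a nonnegative combination of principal minors,
in which the coefficient of the minor at `{i | 0 < t i}` is positive. -/
theorem IsPMatrix.det_mix_pos {n : ℕ} {M : Matrix (Fin n) (Fin n) ℝ} (hM : IsPMatrix M)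
    (t d : Fin n → ℝ) (ht : ∀ i, 0 ≤ t i) (hd : ∀ i, 0 ≤ d i) (htd : ∀ i, 0 < t i + d i) :
    0 < Matrix.det (Matrix.of fun i => t i • M i + d i • (1 : Matrix (Fin n) (Fin n) ℝ) i) := by
  have hminor : ∀ s : Finset (Fin n),
      0 < (rowPiecewise M s).det := by
    intro s
    rw [det_rowPiecewise]
    rcases s.eq_empty_or_nonempty with rfl | hs
    · simp
    · exact hM s hs
  have key : Matrix.det (Matrix.of fun i => t i • M i + d i • (1 : Matrix (Fin n) (Fin n) ℝ) i) =
      ∑ s : Finset (Fin n), (∏ i, s.piecewise t d i) *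
        (rowPiecewise M s).det := by
    have h := (Matrix.detRowAlternating (R := ℝ) (n := Fin n)).toMultilinearMap.map_add_univ
      (fun i => t i • M i) (fun i => d i • (1 : Matrix (Fin n) (Fin n) ℝ) i)
    refine Eq.trans h (Finset.sum_congr rfl fun s _ => ?_)
    have h2 := (Matrix.detRowAlternating (R := ℝ) (n := Fin n)).toMultilinearMap.map_smul_univ
      (s.piecewise t d) (rowPiecewise M s)
    refine Eq.trans ?_ h2
    congr 1
    funext i
    ext j
    by_cases hi : i ∈ s <;> simp [rowPiecewise, hi]
  rw [key]
  refine Finset.sum_pos' (fun s _ => mul_nonneg (Finset.prod_nonneg fun i _ => ?_) (hminor s).le)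
    ⟨Finset.univ.filter fun i => 0 < t i, Finset.mem_univ _,
      mul_pos (Finset.prod_pos fun i _ => ?_) (hminor _)⟩
  · by_cases hi : i ∈ s <;> simp [hi, ht, hd]
  · by_cases hi : 0 < t i
    · simp [Finset.piecewise, hi]
    · have := htd i
      simp only [Finset.piecewise, Finset.mem_filter, Finset.mem_univ, true_and, hi, if_false]
      linarith

/-- A matrix is a P-matrix iff no nonzero vector has its sign reversed by M. -/
theorem pmatrix_iff_no_sign_reversing {n : ℕ} (M : Matrix (Fin n) (Fin n) ℝ) :
    IsPMatrix M ↔ ¬ ∃ x : Fin n → ℝ, x ≠ 0 ∧ ∀ k, x k * M.mulVec x k ≤ 0 := by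
  have hmix : ∀ (t d x : Fin n → ℝ) (k : Fin n),
      ((Matrix.of fun i => t i • M i + d i • (1 : Matrix (Fin n) (Fin n) ℝ) i) *ᵥ x) k =
        t k * (M *ᵥ x) k + d k * x k := by
    intro t d x k
    have h1 : (1 : Matrix (Fin n) (Fin n) ℝ) k ⬝ᵥ x = x k := congrFun (Matrix.one_mulVec x) k
    change (t k • M k + d k • (1 : Matrix (Fin n) (Fin n) ℝ) k) ⬝ᵥ x = _
    rw [add_dotProduct, smul_dotProduct, smul_dotProduct, h1]
    rfl
  constructor
  · rintro hM ⟨x, hx, hk⟩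
    -- The weights solve `t k * (M x) k + d k * x k = 0` without dividing by `x k`.
    have hpos := hM.det_mix_pos (fun k => x k ^ 2)
      (fun k => if x k = 0 then 1 else -(x k * (M *ᵥ x) k)) (fun k => sq_nonneg _)
      (fun k => by
        split_ifs
        · exact zero_le_one
        · linarith [hk k])
      (fun k => by
        split_ifs with h
        · positivity
        · have : 0 < x k ^ 2 := by positivity
          linarith [hk k])
    refine hpos.ne' (Matrix.exists_mulVec_eq_zero_iff.1 ⟨x, hx, ?_⟩)
    funext k
    rw [hmix]
    by_cases h : x k = 0
    · simp [h]
    · simp only [h, if_false, Pi.zero_apply]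
      ring
  · intro hno s _
    let F : ℝ → Matrix (Fin n) (Fin n) ℝ := fun r => Matrix.of fun i =>
      (if i ∈ s then r else 0) • M i +
        (if i ∈ s then 1 - r else 1) • (1 : Matrix (Fin n) (Fin n) ℝ) i
    have hF : ∀ r ∈ Set.Icc (0 : ℝ) 1, (F r).det ≠ 0 := by
      intro r hr hdet
      obtain ⟨x, hx, hFx⟩ := Matrix.exists_mulVec_eq_zero_iff.2 hdet
      have hrow : ∀ k, (if k ∈ s then r else 0) * (M *ᵥ x) k +
          (if k ∈ s then 1 - r else 1) * x k = 0 := fun k =>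
        (hmix _ _ x k).symm.trans (congrFun hFx k)
      rcases hr.1.eq_or_lt with h0 | h0
      · subst h0
        exact hx (funext fun k => by simpa using hrow k)
      · refine hno ⟨x, hx, fun k => ?_⟩
        have h := hrow k
        by_cases hks : k ∈ s
        · simp only [hks, if_true] at h
          have h2 : r * (x k * (M *ᵥ x) k) = -((1 - r) * x k ^ 2) := by
            linear_combination x k * h
          have h3 : 0 ≤ (1 - r) * x k ^ 2 := mul_nonneg (by linarith [hr.2]) (sq_nonneg _)
          by_contra! hc
          nlinarith [mul_pos h0 hc]
        · have hxk : x k = 0 := by simpa [hks] using h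
          simp [hxk]
    have hcont : Continuous fun r => (F r).det := by
      refine Continuous.matrix_det (continuous_matrix fun i j => ?_)
      by_cases hi : i ∈ s <;> simp only [F, hi, if_true, if_false, Matrix.of_apply, Pi.add_apply,
        Pi.smul_apply, smul_eq_mul] <;> fun_prop
    have hF0 : (F 0).det = 1 := by
      have : F 0 = 1 := by
        ext i j
        simp [F]
      rw [this, Matrix.det_one]
    have hF1 : F 1 = rowPiecewise M s := by
      ext i j
      by_cases hi : i ∈ s <;> simp [F, rowPiecewise, hi]
    rw [← det_rowPiecewise, ← hF1]
    by_contra! hle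
    obtain ⟨r, hr, hr0⟩ := intermediate_value_Icc' (zero_le_one' ℝ) hcont.continuousOn
      (show (0 : ℝ) ∈ Set.Icc (F 1).det (F 0).det from ⟨hle, by rw [hF0]; exact zero_le_one⟩)
    exact hF r hr hr0
end

section
/- An n×n real matrix M is a P-matrix if and only if for every q ∈ ℝⁿ there exists exactly one pair (w, z) of vectors in ℝⁿ satisfying w − Mz = q, w ≥ 0, z ≥ 0 and wᵀz = 0. -/
open Matrix Set

/-- The identity matrix with the rows indexed by `S` replaced by those of `M`. -/
def rowMix {n : ℕ} (M : Matrix (Fin n) (Fin n) ℝ) (S : Finset (Fin n)) :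
    Matrix (Fin n) (Fin n) ℝ :=
  S.piecewise M (1 : Matrix (Fin n) (Fin n) ℝ)

theorem rowMix_apply {n : ℕ} (M : Matrix (Fin n) (Fin n) ℝ) (S : Finset (Fin n)) (i j : Fin n) :
    rowMix M S i j = if i ∈ S then M i j else (1 : Matrix (Fin n) (Fin n) ℝ) i j := by
  unfold rowMix Finset.piecewise
  split_ifs <;> rfl

theorem det_rowMix {n : ℕ} (M : Matrix (Fin n) (Fin n) ℝ) (S : Finset (Fin n)) :
    (rowMix M S).det =
      (M.submatrix (fun i : S => (i : Fin n)) (fun j : S => (j : Fin n))).det := by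
  rw [Matrix.twoBlockTriangular_det (rowMix M S) (fun i => i ∈ S)]
  · have h1 : (rowMix M S).toSquareBlockProp (fun i => i ∈ S) =
        M.submatrix (fun i : S => (i : Fin n)) (fun j : S => (j : Fin n)) := by
      ext i j
      simp [Matrix.toSquareBlockProp_def, rowMix_apply]
    have h2 : (rowMix M S).toSquareBlockProp (fun i => ¬ i ∈ S) = 1 := by
      ext i j
      simp [Matrix.toSquareBlockProp_def, rowMix_apply, i.2, Matrix.one_apply, Subtype.ext_iff]
    rw [h2, det_one, mul_one]
    convert congrArg Matrix.det h1
  · intro i hi j hj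
    rw [rowMix_apply, if_neg hi, Matrix.one_apply_ne]
    rintro rfl
    exact hi hj

theorem IsPMatrix.det_rowMix_pos {n : ℕ} {M : Matrix (Fin n) (Fin n) ℝ} (hM : IsPMatrix M)
    (S : Finset (Fin n)) : 0 < (rowMix M S).det := by
  rcases S.eq_empty_or_nonempty with rfl | hS
  · rw [show rowMix M ∅ = 1 from Finset.piecewise_empty _ _, det_one]
    exact one_pos
  · rw [det_rowMix]
    exact hM S hS

theorem IsPMatrix.transpose {n : ℕ} {M : Matrix (Fin n) (Fin n) ℝ} (hM : IsPMatrix M) :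
    IsPMatrix Mᵀ := by
  intro s hs
  rw [← Matrix.transpose_submatrix, det_transpose]
  exact hM s hs

/-- By multilinearity in the rows, `det (D + (1 - D) M)` is a convex combination of the principal
minors of `M`, with product weights. -/
theorem IsPMatrix.det_interp_pos {n : ℕ} {M : Matrix (Fin n) (Fin n) ℝ} (hM : IsPMatrix M)
    (d : Fin n → ℝ) (hd0 : ∀ i, 0 ≤ d i) (hd1 : ∀ i, d i ≤ 1) :
    0 < (Matrix.of fun i j => (1 - d i) * M i j + d i * (1 : Matrix (Fin n) (Fin n) ℝ) i j).det := by
  have key : (Matrix.of fun i j =>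
        (1 - d i) * M i j + d i * (1 : Matrix (Fin n) (Fin n) ℝ) i j).det =
      ∑ S : Finset (Fin n), (∏ i, if i ∈ S then 1 - d i else d i) * (rowMix M S).det := by
    have := (Matrix.detRowAlternating (n := Fin n) (R := ℝ)).toMultilinearMap.map_add_univ
      (fun i => (1 - d i) • M i) (fun i => d i • (1 : Matrix (Fin n) (Fin n) ℝ) i)
    refine Eq.trans this (Finset.sum_congr rfl fun S _ => ?_)
    have h2 := (Matrix.detRowAlternating (n := Fin n) (R := ℝ)).toMultilinearMap.map_smul_univ
      (fun i => if i ∈ S then 1 - d i else d i) (rowMix M S)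
    refine Eq.trans (congrArg _ ?_) h2
    funext i
    unfold rowMix
    by_cases hi : i ∈ S <;> simp [Finset.piecewise, hi]
  have hw : ∑ S : Finset (Fin n), (∏ i, if i ∈ S then 1 - d i else d i) = 1 := by
    have := Finset.prod_add (fun i => 1 - d i) d (Finset.univ : Finset (Fin n))
    simp only [sub_add_cancel, Finset.prod_const_one, Finset.powerset_univ] at this
    refine Eq.trans ?_ this.symm
    refine Finset.sum_congr rfl fun S _ => ?_
    rw [Finset.prod_ite]
    congr 1 <;> refine Finset.prod_congr ?_ fun _ _ => rfl <;> ext <;> simp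
  have hnn : ∀ S : Finset (Fin n), 0 ≤ (∏ i, if i ∈ S then 1 - d i else d i) := fun S =>
    Finset.prod_nonneg fun i _ => by
      split_ifs
      · linarith [hd1 i]
      · exact hd0 i
  rw [key]
  obtain ⟨S, -, hS⟩ : ∃ S ∈ (Finset.univ : Finset (Finset (Fin n))),
      (∏ i, if i ∈ S then 1 - d i else d i) ≠ 0 :=
    Finset.exists_ne_zero_of_sum_ne_zero (by rw [hw]; exact one_ne_zero)
  exact Finset.sum_pos' (fun T _ => mul_nonneg (hnn T) (hM.det_rowMix_pos T).le)
    ⟨S, Finset.mem_univ _, mul_pos (lt_of_le_of_ne (hnn S) hS.symm) (hM.det_rowMix_pos S)⟩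

theorem exists_convex_zero {a b : ℝ} (h : a * b ≤ 0) :
    ∃ d : ℝ, 0 ≤ d ∧ d ≤ 1 ∧ (1 - d) * b + d * a = 0 := by
  by_cases hab : a = b
  · subst hab
    have : a = 0 := by nlinarith
    exact ⟨0, le_rfl, zero_le_one, by simp [this]⟩
  · have hne : b - a ≠ 0 := sub_ne_zero.2 (Ne.symm hab)
    have hsq : 0 < (b - a) ^ 2 := by positivity
    have hd : b / (b - a) = b * (b - a) / (b - a) ^ 2 := by field_simp
    refine ⟨b / (b - a), ?_, ?_, ?_⟩
    · rw [hd]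
      exact div_nonneg (by nlinarith [sq_nonneg b]) hsq.le
    · rw [hd, div_le_one hsq]
      nlinarith [sq_nonneg a]
    · field_simp
      ring

/-- A P-matrix reverses the sign of no nonzero vector. -/
theorem IsPMatrix.eq_zero_of_mul_nonpos {n : ℕ} {M : Matrix (Fin n) (Fin n) ℝ}
    (hM : IsPMatrix M) (r : Fin n → ℝ) (hr : ∀ i, r i * (M *ᵥ r) i ≤ 0) : r = 0 := by
  choose d hd0 hd1 hd using fun i => exists_convex_zero (hr i)
  refine Matrix.eq_zero_of_mulVec_eq_zero (hM.det_interp_pos d hd0 hd1).ne' ?_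
  funext i
  rw [Pi.zero_apply, ← hd i]
  simp only [Matrix.mulVec, dotProduct, Matrix.of_apply, add_mul, Finset.sum_add_distrib,
    mul_assoc, ← Finset.mul_sum]
  simp [Matrix.one_apply]

/-- The cone of complementary pairs of nonnegative vectors. -/
def compCone (n : ℕ) : Set ((Fin n → ℝ) × (Fin n → ℝ)) :=
  {p | (∀ i, 0 ≤ p.1 i) ∧ (∀ i, 0 ≤ p.2 i) ∧ ∀ i, p.1 i * p.2 i = 0}

theorem mem_compCone_iff {n : ℕ} (p : (Fin n → ℝ) × (Fin n → ℝ)) :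
    p ∈ compCone n ↔ (∀ i, 0 ≤ p.1 i) ∧ (∀ i, 0 ≤ p.2 i) ∧ (∑ i, p.1 i * p.2 i) = 0 := by
  constructor
  · rintro ⟨h1, h2, h3⟩
    exact ⟨h1, h2, Finset.sum_eq_zero fun i _ => h3 i⟩
  · rintro ⟨h1, h2, h3⟩
    refine ⟨h1, h2, fun i => ?_⟩
    exact (Finset.sum_eq_zero_iff_of_nonneg fun i _ => mul_nonneg (h1 i) (h2 i)).1 h3 i
      (Finset.mem_univ i)

theorem isClosed_compCone (n : ℕ) : IsClosed (compCone n) := by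
  have : compCone n = (⋂ i, {p | 0 ≤ p.1 i}) ∩ ((⋂ i, {p | 0 ≤ p.2 i}) ∩
      ⋂ i, {p | p.1 i * p.2 i = 0}) := by
    ext p
    simp [compCone]
  rw [this]
  refine (isClosed_iInter fun i => ?_).inter
    ((isClosed_iInter fun i => ?_).inter (isClosed_iInter fun i => ?_))
  · exact isClosed_le (by fun_prop) (by fun_prop)
  · exact isClosed_le (by fun_prop) (by fun_prop)
  · exact isClosed_eq (by fun_prop) (by fun_prop)

/-- The linear map `(w, z) ↦ w - M z`. -/
def lcpMap {n : ℕ} (M : Matrix (Fin n) (Fin n) ℝ) :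
    (Fin n → ℝ) × (Fin n → ℝ) →ₗ[ℝ] (Fin n → ℝ) :=
  LinearMap.fst ℝ _ _ - M.mulVecLin ∘ₗ LinearMap.snd ℝ _ _

theorem lcpMap_apply {n : ℕ} (M : Matrix (Fin n) (Fin n) ℝ) (p : (Fin n → ℝ) × (Fin n → ℝ)) :
    lcpMap M p = p.1 - M *ᵥ p.2 := rfl

theorem IsPMatrix.injOn_lcpMap {n : ℕ} {M : Matrix (Fin n) (Fin n) ℝ} (hM : IsPMatrix M) :
    InjOn (lcpMap M) (compCone n) := by
  rintro ⟨w, z⟩ ⟨h1, h2, h3⟩ ⟨w', z'⟩ ⟨h1', h2', h3'⟩ h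
  simp only at h1 h2 h3 h1' h2' h3'
  simp only [lcpMap_apply] at h
  have hw : M *ᵥ (z - z') = w - w' := by
    rw [Matrix.mulVec_sub]
    linear_combination -h
  have hz : z - z' = 0 := by
    refine hM.eq_zero_of_mul_nonpos _ fun i => ?_
    rw [hw]
    simp only [Pi.sub_apply]
    nlinarith [h3 i, h3' i, mul_nonneg (h1 i) (h2' i), mul_nonneg (h1' i) (h2 i)]
  rw [hz, Matrix.mulVec_zero] at hw
  rw [sub_eq_zero.1 hz, sub_eq_zero.1 hw.symm]

/-- `w - M z` vanishes on the cone only at the origin; compactness of the unit sphere and homogeneity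
turn this into a linear lower bound. -/
theorem IsPMatrix.exists_bound {n : ℕ} {M : Matrix (Fin n) (Fin n) ℝ} (hM : IsPMatrix M) :
    ∃ c : ℝ, 0 < c ∧ ∀ p ∈ compCone n, c * ‖p‖ ≤ ‖lcpMap M p‖ := by
  have hcont : Continuous (lcpMap M) := (lcpMap M).continuous_of_finiteDimensional
  have h0 : (0 : (Fin n → ℝ) × (Fin n → ℝ)) ∈ compCone n := by simp [compCone]
  -- The unit sphere of the cone, onto which every nonzero element of the cone can be scaled.
  have hscale : ∀ p ∈ compCone n, p ≠ 0 →
      ‖p‖⁻¹ • p ∈ compCone n ∩ Metric.sphere 0 1 := by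
    rintro p ⟨h1, h2, h3⟩ hp
    have hpos : 0 < ‖p‖ := norm_pos_iff.2 hp
    refine ⟨⟨fun i => ?_, fun i => ?_, fun i => ?_⟩, ?_⟩
    · exact mul_nonneg (inv_nonneg.2 hpos.le) (h1 i)
    · exact mul_nonneg (inv_nonneg.2 hpos.le) (h2 i)
    · simp only [Prod.smul_fst, Prod.smul_snd, Pi.smul_apply, smul_eq_mul]
      linear_combination ‖p‖⁻¹ * ‖p‖⁻¹ * h3 i
    · rw [mem_sphere_zero_iff_norm, norm_smul, norm_inv, norm_norm, inv_mul_cancel₀ hpos.ne']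
  rcases (compCone n ∩ Metric.sphere 0 1).eq_empty_or_nonempty with he | hne
  · refine ⟨1, one_pos, fun p hp => ?_⟩
    by_cases hp0 : p = 0
    · simp [hp0]
    · have := hscale p hp hp0
      rw [he] at this
      exact this.elim
  · obtain ⟨p₀, hp₀, hmin⟩ := ((isCompact_sphere _ _).inter_left
      (isClosed_compCone n)).exists_isMinOn hne (hcont.norm.continuousOn)
    refine ⟨‖lcpMap M p₀‖, norm_pos_iff.2 fun hz => ?_, fun p hp => ?_⟩
    · have : p₀ = 0 := hM.injOn_lcpMap hp₀.1 h0 (by rw [hz, map_zero])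
      have h1 := mem_sphere_zero_iff_norm.1 hp₀.2
      simp [this] at h1
    · by_cases hp0 : p = 0
      · simp [hp0]
      · have hpos : 0 < ‖p‖ := norm_pos_iff.2 hp0
        have := isMinOn_iff.1 hmin _ (hscale p hp hp0)
        rw [map_smul, norm_smul, norm_inv, norm_norm, inv_mul_eq_div, le_div_iff₀ hpos] at this
        exact this

theorem norm_sq_le_dotProduct {n : ℕ} (v : Fin n → ℝ) : ‖v‖ ^ 2 ≤ v ⬝ᵥ v := by
  have hnn : 0 ≤ v ⬝ᵥ v := Finset.sum_nonneg fun i _ => mul_self_nonneg _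
  have h : ‖v‖ ≤ √(v ⬝ᵥ v) := by
    refine (pi_norm_le_iff_of_nonneg (Real.sqrt_nonneg _)).2 fun i => Real.abs_le_sqrt ?_
    rw [sq]
    exact Finset.single_le_sum (f := fun i => v i * v i) (fun j _ => mul_self_nonneg _)
      (Finset.mem_univ i)
  calc ‖v‖ ^ 2 ≤ √(v ⬝ᵥ v) ^ 2 := by gcongr
    _ = v ⬝ᵥ v := Real.sq_sqrt hnn

theorem IsPMatrix.exists_min {n : ℕ} {M : Matrix (Fin n) (Fin n) ℝ} (hM : IsPMatrix M)
    (q : Fin n → ℝ) : ∃ p ∈ compCone n, ∀ p' ∈ compCone n,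
      (lcpMap M p - q) ⬝ᵥ (lcpMap M p - q) ≤ (lcpMap M p' - q) ⬝ᵥ (lcpMap M p' - q) := by
  have hcont : Continuous (lcpMap M) := (lcpMap M).continuous_of_finiteDimensional
  have h0 : (0 : (Fin n → ℝ) × (Fin n → ℝ)) ∈ compCone n := by simp [compCone]
  obtain ⟨c, hc, hbound⟩ := hM.exists_bound
  have hf : Continuous fun p => (lcpMap M p - q) ⬝ᵥ (lcpMap M p - q) := by
    have : Continuous fun p => lcpMap M p - q := hcont.sub continuous_const
    exact this.dotProduct this
  obtain ⟨p, hp, hmin⟩ := hf.continuousOn.exists_isMinOn' (isClosed_compCone n) h0 (by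
    have hev := Filter.Tendsto.eventually_ge_atTop (tendsto_norm_cocompact_atTop
      (E := (Fin n → ℝ) × (Fin n → ℝ))) ((‖q‖ + (q ⬝ᵥ q + 1)) / c)
    rw [Filter.eventually_inf_principal]
    filter_upwards [hev] with p hpn hpC
    rw [div_le_iff₀ hc] at hpn
    have h1 := hbound p hpC
    have h2 := norm_sub_norm_le (lcpMap M p) q
    have h3 := norm_sq_le_dotProduct (lcpMap M p - q)
    have h4 : 0 ≤ q ⬝ᵥ q := Finset.sum_nonneg fun i _ => mul_self_nonneg _
    have h5 : q ⬝ᵥ q + 1 ≤ ‖lcpMap M p - q‖ := by linarith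
    have h6 : (lcpMap M 0 - q) ⬝ᵥ (lcpMap M 0 - q) = q ⬝ᵥ q := by simp
    rw [h6]
    nlinarith)
  exact ⟨p, hp, fun p' hp' => isMinOn_iff.1 hmin p' hp'⟩

theorem nonneg_of_quadratic {a b ε : ℝ} (hε : 0 < ε)
    (h : ∀ t, 0 ≤ t → t ≤ ε → 0 ≤ 2 * t * a + t ^ 2 * b) : 0 ≤ a := by
  by_contra! ha
  -- A step short enough for the linear term to dominate the quadratic one.
  set t := min ε (-a / (|b| + 1)) with ht
  have hb : 0 < |b| + 1 := by positivity
  have htpos : 0 < t := lt_min hε (div_pos (neg_pos.2 ha) hb)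
  have h1 := h t htpos.le (min_le_left _ _)
  have h2 : t * (|b| + 1) ≤ -a := (le_div_iff₀ hb).1 (min_le_right _ _)
  have h3 : 0 ≤ 2 * a + t * b := by
    by_contra! h4
    nlinarith
  nlinarith [le_abs_self b]

/-- First-order optimality along a segment that stays in the cone. -/
theorem first_order {n : ℕ} {M : Matrix (Fin n) (Fin n) ℝ} {q : Fin n → ℝ}
    {p : (Fin n → ℝ) × (Fin n → ℝ)}
    (hmin : ∀ p' ∈ compCone n,
      (lcpMap M p - q) ⬝ᵥ (lcpMap M p - q) ≤ (lcpMap M p' - q) ⬝ᵥ (lcpMap M p' - q))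
    (u : (Fin n → ℝ) × (Fin n → ℝ)) {ε : ℝ} (hε : 0 < ε)
    (hu : ∀ t, 0 ≤ t → t ≤ ε → p + t • u ∈ compCone n) :
    0 ≤ (lcpMap M p - q) ⬝ᵥ lcpMap M u := by
  refine nonneg_of_quadratic (b := lcpMap M u ⬝ᵥ lcpMap M u) hε fun t h0 h1 => ?_
  have h := hmin _ (hu t h0 h1)
  have he : lcpMap M (p + t • u) - q = (lcpMap M p - q) + t • lcpMap M u := by
    rw [map_add, map_smul]
    abel
  rw [he] at h
  simp only [add_dotProduct, dotProduct_add, smul_dotProduct, dotProduct_smul, smul_eq_mul,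
    dotProduct_comm (lcpMap M u) (lcpMap M p - q)] at h
  linarith

theorem IsPMatrix.exists_lcpMap_eq {n : ℕ} {M : Matrix (Fin n) (Fin n) ℝ} (hM : IsPMatrix M)
    (q : Fin n → ℝ) : ∃ p ∈ compCone n, lcpMap M p = q := by
  obtain ⟨p, hp, hmin⟩ := hM.exists_min q
  refine ⟨p, hp, sub_eq_zero.1 (hM.transpose.eq_zero_of_mul_nonpos _ fun i => ?_)⟩
  obtain ⟨h1, h2, h3⟩ := hp
  set r := lcpMap M p - q with hr
  -- Moving `w i` by `σ t` is admissible when `z i = 0` and `w i` stays nonnegative.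
  have hw : ∀ σ ε : ℝ, 0 < ε → p.2 i = 0 → (∀ t, 0 ≤ t → t ≤ ε → 0 ≤ p.1 i + t * σ) →
      0 ≤ σ * r i := by
    intro σ ε hε hz hσ
    have := first_order hmin (Pi.single i σ, 0) hε (by
      intro t h0 ht
      refine ⟨fun j => ?_, fun j => ?_, fun j => ?_⟩ <;> by_cases hj : j = i
      · subst hj; simpa using hσ t h0 ht
      · simpa [hj] using h1 j
      · simpa using h2 j
      · simpa using h2 j
      · subst hj; simp [hz]
      · simpa [hj] using h3 j)
    simpa [hr, lcpMap_apply, mul_comm] using this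
  have hz : ∀ σ ε : ℝ, 0 < ε → p.1 i = 0 → (∀ t, 0 ≤ t → t ≤ ε → 0 ≤ p.2 i + t * σ) →
      0 ≤ -(σ * (Mᵀ *ᵥ r) i) := by
    intro σ ε hε hz hσ
    have := first_order hmin (0, Pi.single i σ) hε (by
      intro t h0 ht
      refine ⟨fun j => ?_, fun j => ?_, fun j => ?_⟩ <;> by_cases hj : j = i
      · simpa using h1 j
      · simpa using h1 j
      · subst hj; simpa using hσ t h0 ht
      · simpa [hj] using h2 j
      · subst hj; simp [hz]
      · simpa [hj] using h3 j)
    rw [← hr, lcpMap_apply, zero_sub, dotProduct_neg, Matrix.dotProduct_mulVec, dotProduct_single,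
      ← Matrix.mulVec_transpose] at this
    linarith
  rcases (h1 i).eq_or_lt with hwi | hwi
  · rcases (h2 i).eq_or_lt with hzi | hzi
    · have a := hw 1 1 one_pos hzi.symm fun t ht _ => by linarith
      have b := hz 1 1 one_pos hwi.symm fun t ht _ => by linarith
      nlinarith
    · have a := hz 1 1 one_pos hwi.symm fun t ht _ => by linarith
      have b := hz (-1) (p.2 i) hzi hwi.symm fun t _ ht => by linarith
      have : (Mᵀ *ᵥ r) i = 0 := by linarith
      rw [this, mul_zero]
  · have hzi : p.2 i = 0 := (mul_eq_zero.1 (h3 i)).resolve_left hwi.ne'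
    have a := hw 1 1 one_pos hzi fun t ht _ => by linarith
    have b := hw (-1) (p.1 i) hwi hzi fun t _ ht => by linarith
    have : r i = 0 := by linarith
    rw [this, zero_mul]

/-- The pair `(x⁺, x⁻)`. -/
def posNegPart {n : ℕ} (x : Fin n → ℝ) : (Fin n → ℝ) × (Fin n → ℝ) :=
  (fun i => max (x i) 0, fun i => max (-x i) 0)

theorem posNegPart_mem {n : ℕ} (x : Fin n → ℝ) : posNegPart x ∈ compCone n := by
  refine ⟨fun i => le_max_right _ _, fun i => le_max_right _ _, fun i => ?_⟩
  rcases le_total (x i) 0 with h | h <;> simp [posNegPart, h]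

theorem posNegPart_injective {n : ℕ} : Function.Injective (posNegPart (n := n)) := by
  intro x y h
  have key : ∀ v : Fin n → ℝ, (posNegPart v).1 - (posNegPart v).2 = v := by
    intro v
    funext i
    rcases le_total (v i) 0 with h | h <;> simp [posNegPart, h]
  rw [← key x, h, key y]

/-- On the orthant given by `S` the map `x ↦ x⁺ - M x⁻` is linear; its matrix has the columns of
`M` on `S` and those of the identity off `S`. -/
theorem lcpMap_posNegPart {n : ℕ} (M : Matrix (Fin n) (Fin n) ℝ) (S : Finset (Fin n))
    (x : Fin n → ℝ) (hS : ∀ j ∈ S, x j ≤ 0) (hS' : ∀ j ∉ S, 0 ≤ x j) :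
    lcpMap M (posNegPart x) = (rowMix Mᵀ S)ᵀ *ᵥ x := by
  funext i
  have h1 : max (x i) 0 = ∑ j, (1 : Matrix (Fin n) (Fin n) ℝ) i j * max (x j) 0 := by
    simp [Matrix.one_apply]
  simp only [lcpMap_apply, posNegPart, Pi.sub_apply, Matrix.mulVec, dotProduct]
  rw [h1, ← Finset.sum_sub_distrib]
  refine Finset.sum_congr rfl fun j _ => ?_
  by_cases hj : j ∈ S
  · simp [rowMix_apply, hj, hS j hj]
  · simp [rowMix_apply, hj, hS' j hj, Matrix.one_apply, eq_comm]

/-- If `x ↦ x⁺ - M x⁻` is injective, its determinants on all orthants are positive. The step adds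
one index `i` and compares the images of two points on either side of the facet `x i = 0`. -/
theorem minor_pos_of_injective {n : ℕ} (M : Matrix (Fin n) (Fin n) ℝ)
    (hinj : InjOn (lcpMap M) (compCone n)) (S : Finset (Fin n)) :
    0 < (rowMix Mᵀ S)ᵀ.det := by
  induction S using Finset.induction_on with
  | empty =>
    rw [show rowMix Mᵀ ∅ = 1 from Finset.piecewise_empty _ _, transpose_one, det_one]
    exact one_pos
  | insert i S hi ih =>
    by_contra! hneg
    set A := (rowMix Mᵀ S)ᵀ with hA
    set B := (rowMix Mᵀ (insert i S))ᵀ with hB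
    have hBA : B = A.updateCol i (M.col i) := by
      ext k j
      by_cases hj : j = i
      · subst hj; simp [hB, rowMix_apply]
      · simp [hA, hB, rowMix_apply, hj]
    set c := A.cramer (M.col i) with hc
    have hci : c i ≤ 0 := by
      rw [hc, Matrix.cramer_apply, ← hBA]
      exact hneg
    -- A point on the facet, far enough from the other facets for subtracting `c` to be harmless.
    set x : Fin n → ℝ := fun j => if j = i then 0 else if j ∈ S then -‖c‖ else ‖c‖ with hx
    have hcn : ∀ j, |c j| ≤ ‖c‖ := fun j => norm_le_pi_norm c j
    have hy : lcpMap M (posNegPart (x - c)) = A *ᵥ (x - c) := by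
      refine lcpMap_posNegPart M S _ (fun j hj => ?_) (fun j hj => ?_)
      · have hji : j ≠ i := by rintro rfl; exact hi hj
        simp only [Pi.sub_apply, hx, if_neg hji, if_pos hj]
        linarith [(abs_le.1 (hcn j)).1]
      · by_cases hji : j = i
        · subst hji
          simpa [hx] using hci
        · simp only [Pi.sub_apply, hx, if_neg hji, if_neg hj]
          linarith [(abs_le.1 (hcn j)).2]
    have hy' : lcpMap M (posNegPart (x - Pi.single i A.det)) = B *ᵥ (x - Pi.single i A.det) := by
      refine lcpMap_posNegPart M (insert i S) _ (fun j hj => ?_) (fun j hj => ?_)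
      · by_cases hji : j = i
        · subst hji
          simpa [hx] using ih.le
        · have hjS : j ∈ S := (Finset.mem_insert.1 hj).resolve_left hji
          simp [hx, hji, hjS]
      · have hji : j ≠ i := by rintro rfl; exact hj (Finset.mem_insert_self _ _)
        have hjS : j ∉ S := fun h => hj (Finset.mem_insert_of_mem h)
        simp [hx, hji, hjS]
    have hAB : A *ᵥ x = B *ᵥ x := by
      funext k
      simp only [Matrix.mulVec, dotProduct]
      refine Finset.sum_congr rfl fun j _ => ?_
      by_cases hj : j = i
      · subst hj; simp [hx]
      · simp [hBA, hj]
    have heq : A *ᵥ (x - c) = B *ᵥ (x - Pi.single i A.det) := by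
      rw [Matrix.mulVec_sub, Matrix.mulVec_sub, hAB, hc, Matrix.mulVec_cramer]
      congr 1
      funext k
      simp [hBA, mul_comm]
    have h := posNegPart_injective (hinj (posNegPart_mem _) (posNegPart_mem _)
      (hy.trans (heq.trans hy'.symm)))
    have hcomp := congrFun h i
    simp [hx] at hcomp
    linarith

/-- A matrix is a P-matrix iff every LCP with that matrix has a unique solution. -/
theorem pmatrix_iff_unique_lcp_solution {n : ℕ} (M : Matrix (Fin n) (Fin n) ℝ) :
    IsPMatrix M ↔
      ∀ q : Fin n → ℝ, ∃! p : (Fin n → ℝ) × (Fin n → ℝ),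
        p.1 - M.mulVec p.2 = q ∧ (∀ i, 0 ≤ p.1 i) ∧ (∀ i, 0 ≤ p.2 i) ∧
          (∑ i, p.1 i * p.2 i) = 0 := by
  simp only [← mem_compCone_iff, ← lcpMap_apply]
  constructor
  · intro hM q
    obtain ⟨p, hp, hpq⟩ := hM.exists_lcpMap_eq q
    exact ⟨p, ⟨hpq, hp⟩, fun p' hp' => hM.injOn_lcpMap hp'.2 hp (hp'.1.trans hpq.symm)⟩
  · intro h s _
    have hinj : InjOn (lcpMap M) (compCone n) := fun p hp p' hp' hpp =>
      (h (lcpMap M p')).unique ⟨hpp, hp⟩ ⟨rfl, hp'⟩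
    have hpos := minor_pos_of_injective M hinj s
    rwa [det_transpose, det_rowMix, ← Matrix.transpose_submatrix, det_transpose] at hpos
end

section
/- If 𝒱 is a P-matroid on E_{2n} and F ⊆ E_{2n} is a complementary set, then the principal pivot transform of 𝒱 with respect to F is again an oriented matroid on E_{2n}, and it is a P-matroid. -/
/-!
The principal pivot transform with respect to `F` is precomposition with the map `pivot bar F`
of the ground set that exchanges `e` and `bar e` for `e` in `F ∪ bar '' F`. This map is an
involution commuting with `bar`, so the transform is merely a relabelling of the ground set:
the vector axioms and the notion of circuit are invariant under relabelling by a bijection, and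
sign-reversal is invariant because the relabelling commutes with `bar`.
-/

/-- The support of a sign vector. -/
def supp {E : Type*} (X : E → SignType) : Set E := {e | X e ≠ 0}

/-- The positive part of a sign vector. -/
def posPart {E : Type*} (X : E → SignType) : Set E := {e | X e = 1}

/-- The negative part of a sign vector. -/
def negPart {E : Type*} (X : E → SignType) : Set E := {e | X e = -1}

/-- Composition of sign vectors. -/
def sComp {E : Type*} (X Y : E → SignType) : E → SignType :=
  fun e => if X e = 0 then Y e else X e

/-- The vector axioms of an oriented matroid. -/
def IsOM {E : Type*} (V : Set (E → SignType)) : Prop :=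
  (0 : E → SignType) ∈ V ∧
  (∀ X ∈ V, -X ∈ V) ∧
  (∀ X ∈ V, ∀ Y ∈ V, sComp X Y ∈ V) ∧
  (∀ X ∈ V, ∀ Y ∈ V, ∀ e, X e = 1 → Y e = -1 →
    ∃ Z ∈ V, Z e = 0 ∧
      posPart Z ⊆ posPart X ∪ posPart Y ∧
      negPart Z ⊆ negPart X ∪ negPart Y ∧
      (supp X \ supp Y) ∪ (supp Y \ supp X) ∪ (posPart X ∩ posPart Y) ∪
        (negPart X ∩ negPart Y) ⊆ supp Z)

/-- A circuit: a nonzero vector of minimal nonempty support. -/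
def IsCircuit {E : Type*} (V : Set (E → SignType)) (C : E → SignType) : Prop :=
  C ∈ V ∧ C ≠ 0 ∧ ∀ X ∈ V, X ≠ 0 → ¬ (supp X ⊂ supp C)

/-- Orthogonality of sign vectors. -/
def Orthogonal {E : Type*} (X Y : E → SignType) : Prop :=
  (Set.range (fun e => X e * Y e)) = {0} ∨
  ((1 : SignType) ∈ Set.range (fun e => X e * Y e) ∧
   (-1 : SignType) ∈ Set.range (fun e => X e * Y e))

/-- The covectors: all sign vectors orthogonal to every vector. -/
def covectors {E : Type*} (V : Set (E → SignType)) : Set (E → SignType) :=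
  {Y | ∀ X ∈ V, Orthogonal X Y}

/-- A basis: an inclusion-maximal set containing the support of no circuit. -/
def IsBasis {E : Type*} (V : Set (E → SignType)) (B : Set E) : Prop :=
  (∀ C, IsCircuit V C → ¬ supp C ⊆ B) ∧
  ∀ B' : Set E, B ⊂ B' → ∃ C, IsCircuit V C ∧ supp C ⊆ B'

/-- Sign-reversing sign vector. -/
def SignReversing {E : Type*} (bar : E → E) (X : E → SignType) : Prop :=
  ∀ e, X e * X (bar e) ≤ 0

/-- Totally sign-reversing sign vector. -/
def TotallySignReversing {E : Type*} (bar : E → E) (X : E → SignType) : Prop :=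
  SignReversing bar X ∧ supp X = Set.univ

/-- Sign-preserving sign vector. -/
def SignPreserving {E : Type*} (bar : E → E) (X : E → SignType) : Prop :=
  ∀ e, 0 ≤ X e * X (bar e)

/-- Totally sign-preserving sign vector. -/
def TotallySignPreserving {E : Type*} (bar : E → E) (X : E → SignType) : Prop :=
  SignPreserving bar X ∧ supp X = Set.univ

/-- A P-matroid: an oriented matroid with no sign-reversing circuit. -/
def IsPMatroid {E : Type*} (bar : E → E) (V : Set (E → SignType)) : Prop :=
  IsOM V ∧ ∀ C, IsCircuit V C → ¬ SignReversing bar C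

/-- A Z-matroid. -/
def IsZMatroid {E : Type*} (bar : E → E) (S T : Set E) (V : Set (E → SignType)) : Prop :=
  IsOM V ∧ ∀ C, IsCircuit V C → (∀ f ∈ T, 0 ≤ C f) → ∀ e ∈ S, C e = 1 → C (bar e) = 1

/-- A K-matroid: both a P-matroid and a Z-matroid. -/
def IsKMatroid {E : Type*} (bar : E → E) (S T : Set E) (V : Set (E → SignType)) : Prop :=
  IsPMatroid bar V ∧ IsZMatroid bar S T V

/-- The ground structure E_{2n}: a fixed-point-free involution `bar` and a
partition into two n-element sets S, T with bar mapping S into T. -/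
structure IsGround {E : Type*} (bar : E → E) (S T : Set E) (n : ℕ) : Prop where
  inv : ∀ e, bar (bar e) = e
  ff : ∀ e, bar e ≠ e
  union_eq : S ∪ T = Set.univ
  disj : Disjoint S T
  cardS : S.ncard = n
  cardT : T.ncard = n
  barS : ∀ e ∈ S, bar e ∈ T

open Classical in
/-- The principal pivot transform of a sign vector with respect to a
complementary set F: swap the entries at e and ē for e ∈ F ∪ F̄. -/
noncomputable def ppt {E : Type*} (bar : E → E) (F : Set E) (X : E → SignType) :
    E → SignType :=
  fun e => if e ∈ F ∪ bar '' F then X (bar e) else X e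

open Classical in
/-- The relabelling of the ground set underlying the principal pivot transform: exchange `e` and
`bar e` for `e` in `F ∪ bar '' F`, and fix all other elements. -/
noncomputable def pivot {E : Type*} (bar : E → E) (F : Set E) (e : E) : E :=
  if e ∈ F ∪ bar '' F then bar e else e

theorem ppt_eq_comp_pivot {E : Type*} (bar : E → E) (F : Set E) (X : E → SignType) :
    ppt bar F X = X ∘ pivot bar F := by
  funext e
  simp only [ppt, pivot, Function.comp]
  split_ifs <;> rfl

theorem bar_mem_iff {E : Type*} {bar : E → E} (hinv : ∀ e, bar (bar e) = e) (F : Set E) (e : E) :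
    bar e ∈ F ∪ bar '' F ↔ e ∈ F ∪ bar '' F := by
  have h : ∀ e, e ∈ F ∪ bar '' F → bar e ∈ F ∪ bar '' F := by
    rintro e (he | ⟨f, hf, rfl⟩)
    · exact Or.inr ⟨e, he, rfl⟩
    · exact Or.inl (by rwa [hinv])
  exact ⟨fun he => by simpa only [hinv] using h _ he, h e⟩

theorem pivot_pivot {E : Type*} {bar : E → E} (hinv : ∀ e, bar (bar e) = e) (F : Set E) (e : E) :
    pivot bar F (pivot bar F e) = e := by
  by_cases he : e ∈ F ∪ bar '' F
  · have he' := (bar_mem_iff hinv F e).2 he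
    rw [pivot, pivot, if_pos he, if_pos he', hinv]
  · rw [pivot, pivot, if_neg he, if_neg he]

theorem pivot_bar {E : Type*} {bar : E → E} (hinv : ∀ e, bar (bar e) = e) (F : Set E) (e : E) :
    pivot bar F (bar e) = bar (pivot bar F e) := by
  by_cases he : e ∈ F ∪ bar '' F
  · have he' := (bar_mem_iff hinv F e).2 he
    rw [pivot, pivot, if_pos he, if_pos he']
  · have he' := fun h => he ((bar_mem_iff hinv F e).1 h)
    rw [pivot, pivot, if_neg he, if_neg he']

/-- The vector axioms are invariant under relabelling the ground set; they are pointwise, so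
any map serves as the relabelling here. -/
theorem IsOM.relabel {E : Type*} {V : Set (E → SignType)} (hV : IsOM V) (σ : E → E) :
    IsOM ((fun X => X ∘ σ) '' V) := by
  obtain ⟨h0, hneg, hcomp, helim⟩ := hV
  refine ⟨⟨0, h0, rfl⟩, ?_, ?_, ?_⟩
  · rintro _ ⟨X, hX, rfl⟩
    exact ⟨-X, hneg X hX, rfl⟩
  · rintro _ ⟨X, hX, rfl⟩ _ ⟨Y, hY, rfl⟩
    exact ⟨sComp X Y, hcomp X hX Y hY, rfl⟩
  · rintro _ ⟨X, hX, rfl⟩ _ ⟨Y, hY, rfl⟩ e hXe hYe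
    obtain ⟨Z, hZ, hZe, hpos, hnegZ, hsupp⟩ := helim X hX Y hY (σ e) hXe hYe
    exact ⟨Z ∘ σ, ⟨Z, hZ, rfl⟩, hZe, fun f hf => hpos (a := σ f) hf,
      fun f hf => hnegZ (a := σ f) hf, fun f hf => hsupp (a := σ f) hf⟩

/-- A circuit of the relabelled system comes from a circuit of the original one. -/
theorem IsCircuit.of_relabel {E : Type*} {V : Set (E → SignType)} {σ : E → E}
    (hσ : Function.Surjective σ) {X : E → SignType} (hX : X ∈ V)
    (hC : IsCircuit ((fun X => X ∘ σ) '' V) (X ∘ σ)) : IsCircuit V X := by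
  obtain ⟨-, hne, hmin⟩ := hC
  refine ⟨hX, fun h => hne (by rw [h]; rfl), fun Y hY hY0 hss => ?_⟩
  refine hmin (Y ∘ σ) ⟨Y, hY, rfl⟩ (fun h => hY0 ?_)
    ⟨fun f hf => hss.1 (show σ f ∈ supp Y from hf), fun h => ?_⟩
  · exact hσ.injective_comp_right (show Y ∘ σ = (0 : E → SignType) ∘ σ from h)
  · refine hss.2 fun f hf => ?_
    obtain ⟨g, rfl⟩ := hσ f
    exact h (show g ∈ supp (X ∘ σ) from hf)

/-- The principal pivot transform of a P-matroid is an oriented matroid and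
again a P-matroid. -/
theorem ppt_pmatroid {E : Type*} {n : ℕ} (bar : E → E)
    (S T : Set E) (hG : IsGround bar S T n)
    (V : Set (E → SignType)) (hP : IsPMatroid bar V)
    (F : Set E) (hF : F ∩ (bar '' F) = ∅) :
    IsOM (ppt bar F '' V) ∧ IsPMatroid bar (ppt bar F '' V) := by
  have hσ : ppt bar F = fun X => X ∘ pivot bar F := funext (ppt_eq_comp_pivot bar F)
  have hsurj : Function.Surjective (pivot bar F) := fun e => ⟨_, pivot_pivot hG.inv F e⟩
  have hOM : IsOM (ppt bar F '' V) := hσ ▸ hP.1.relabel (pivot bar F)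
  refine ⟨hOM, hOM, ?_⟩
  rw [hσ]
  rintro _ hC hrev
  obtain ⟨X, hX, rfl⟩ := hC.1
  refine hP.2 X (hC.of_relabel hsurj hX) fun e => ?_
  obtain ⟨f, rfl⟩ := hsurj e
  have h := hrev f
  simp only [Function.comp, pivot_bar hG.inv] at h
  exact h
end

section
/- Let 𝒱 be an LCP-realizable oriented matroid on E_{2n} with realization matrix M ∈ ℝ^{n×n}. Then 𝒱 is a Z-matroid if and only if M is a Z-matrix. -/
/-- `V` is the LCP-realizable oriented matroid on `Fin n ⊕ Fin n` (the left
summand playing the role of S = {1,…,n}, the right summand that of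
T = {n+1,…,2n}, with the involution swapping the two copies) realized by `M`,
i.e. `V = { sgn x : [Iₙ −M] x = 0 }`. -/
def Realizes {n : ℕ} (M : Matrix (Fin n) (Fin n) ℝ)
    (V : Set (Fin n ⊕ Fin n → SignType)) : Prop :=
  V = { X | ∃ x : Fin n ⊕ Fin n → ℝ,
        (∀ i, x (Sum.inl i) = M.mulVec (fun j => x (Sum.inr j)) i) ∧
        ∀ e, X e = SignType.sign (x e) }

open Filter Topology

lemma mem_supp_iff {E : Type*} (X : E → SignType) (e : E) : e ∈ supp X ↔ X e ≠ 0 := Iff.rfl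

lemma mem_posPart_iff {E : Type*} (X : E → SignType) (e : E) : e ∈ posPart X ↔ X e = 1 := Iff.rfl

lemma mem_negPart_iff {E : Type*} (X : E → SignType) (e : E) : e ∈ negPart X ↔ X e = -1 := Iff.rfl

/-- Composition of sign vectors is realized by adding a small positive multiple. -/
lemma exists_sign_add_smul {E : Type*} [Finite E] (x y : E → ℝ) :
    ∃ ε : ℝ, ∀ e, SignType.sign (x e + ε * y e) =
      if SignType.sign (x e) = 0 then SignType.sign (y e) else SignType.sign (x e) := by
  have h : ∀ᶠ ε in 𝓝[>] (0 : ℝ), ∀ e, SignType.sign (x e + ε * y e) =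
      if SignType.sign (x e) = 0 then SignType.sign (y e) else SignType.sign (x e) := by
    rw [eventually_all]
    intro e
    have hc : Tendsto (fun ε : ℝ => x e + ε * y e) (𝓝[>] 0) (𝓝 (x e)) := by
      have : Continuous (fun ε : ℝ => x e + ε * y e) := by fun_prop
      have h0 := this.tendsto 0
      simp only [zero_mul, add_zero] at h0
      exact h0.mono_left nhdsWithin_le_nhds
    rcases lt_trichotomy (x e) 0 with hx | hx | hx
    · filter_upwards [hc.eventually_lt_const hx] with ε hε
      simp [sign_neg hε, sign_neg hx]
    · filter_upwards [self_mem_nhdsWithin] with ε hε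
      simp [hx, sign_mul, sign_pos (Set.mem_Ioi.mp hε)]
    · filter_upwards [hc.eventually_const_lt hx] with ε hε
      simp [sign_pos hε, sign_pos hx]
  exact h.exists

/-- The sign vectors of a linear subspace of a finite-dimensional coordinate space form an
oriented matroid. -/
lemma isOM_sign_submodule {E : Type*} [Finite E] (W : Submodule ℝ (E → ℝ)) :
    IsOM {X : E → SignType | ∃ x ∈ W, ∀ e, X e = SignType.sign (x e)} := by
  refine ⟨⟨0, W.zero_mem, by simp⟩, ?_, ?_, ?_⟩
  · rintro X ⟨x, hx, hX⟩
    exact ⟨-x, W.neg_mem hx, fun e => by simp [hX, Left.sign_neg]⟩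
  · rintro X ⟨x, hx, hX⟩ Y ⟨y, hy, hY⟩
    obtain ⟨ε, hε⟩ := exists_sign_add_smul x y
    refine ⟨x + ε • y, W.add_mem hx (W.smul_mem _ hy), fun e => ?_⟩
    simp only [sComp, hX, hY, Pi.add_apply, Pi.smul_apply, smul_eq_mul, hε]
  · rintro X ⟨x, hx, hX⟩ Y ⟨y, hy, hY⟩ e hXe hYe
    rw [hX, sign_eq_one_iff] at hXe
    rw [hY, sign_eq_neg_one_iff] at hYe
    obtain ⟨a, ha⟩ : ∃ a, a = -y e := ⟨_, rfl⟩
    obtain ⟨b, hb⟩ : ∃ b, b = x e := ⟨_, rfl⟩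
    have ha0 : 0 < a := by linarith
    have hb0 : 0 < b := by linarith
    refine ⟨fun f => SignType.sign (a * x f + b * y f),
      ⟨a • x + b • y, W.add_mem (W.smul_mem _ hx) (W.smul_mem _ hy), fun f => rfl⟩, ?_, ?_, ?_, ?_⟩
    · rw [sign_eq_zero_iff, ha, hb]; ring
    · intro f hf
      simp only [mem_posPart_iff, Set.mem_union, hX, hY, sign_eq_one_iff] at hf ⊢
      by_contra! h
      nlinarith [mul_nonneg ha0.le (neg_nonneg.2 h.1), mul_nonneg hb0.le (neg_nonneg.2 h.2)]
    · intro f hf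
      simp only [mem_negPart_iff, Set.mem_union, hX, hY, sign_eq_neg_one_iff] at hf ⊢
      by_contra! h
      nlinarith [mul_nonneg ha0.le h.1, mul_nonneg hb0.le h.2]
    · intro f hf
      simp only [mem_supp_iff, mem_posPart_iff, mem_negPart_iff, Set.mem_union, Set.mem_sdiff,
        Set.mem_inter_iff, hX, hY, sign_eq_neg_one_iff, sign_eq_one_iff, ne_eq,
        sign_eq_zero_iff, not_not] at hf ⊢
      rcases hf with ((⟨h1, h2⟩ | ⟨h1, h2⟩) | ⟨h1, h2⟩) | ⟨h1, h2⟩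
      · simp [h2, h1, ha0.ne']
      · simp [h2, h1, hb0.ne']
      · exact (add_pos (mul_pos ha0 h1) (mul_pos hb0 h2)).ne'
      · exact (add_neg (mul_neg_of_pos_of_neg ha0 h1) (mul_neg_of_pos_of_neg hb0 h2)).ne

/-- The kernel of `[I, -M]`. -/
def lcpKernel {n : ℕ} (M : Matrix (Fin n) (Fin n) ℝ) : Submodule ℝ (Fin n ⊕ Fin n → ℝ) where
  carrier := {x | ∀ i, x (Sum.inl i) = M.mulVec (fun j => x (Sum.inr j)) i}
  zero_mem' := fun i => by simp [Matrix.mulVec, dotProduct]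
  add_mem' := fun {x y} hx hy i => by
    simp only [Pi.add_apply, hx i, hy i, Matrix.mulVec, dotProduct, mul_add,
      Finset.sum_add_distrib]
  smul_mem' := fun c x hx i => by
    simp only [Pi.smul_apply, smul_eq_mul, hx i, Matrix.mulVec, dotProduct, Finset.mul_sum]
    exact Finset.sum_congr rfl fun j _ => by ring

/-- The vector with `S`-part the `j`-th column of `M` and `T`-part the `j`-th unit vector. -/
def colVec {n : ℕ} (M : Matrix (Fin n) (Fin n) ℝ) (j : Fin n) : Fin n ⊕ Fin n → ℝ :=
  Sum.elim (fun i => M i j) (Pi.single j 1)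

/-- Column `j` of `M` yields a circuit: a kernel vector whose `T`-part is supported in `{j}` is a
multiple of `colVec M j`, so it is zero or has the same support. -/
lemma isCircuit_colVec {n : ℕ} (M : Matrix (Fin n) (Fin n) ℝ)
    (V : Set (Fin n ⊕ Fin n → SignType)) (hreal : Realizes M V) (j : Fin n) :
    IsCircuit V (fun e => SignType.sign (colVec M j e)) := by
  subst hreal
  refine ⟨⟨colVec M j, fun i => ?_, fun e => rfl⟩, fun h => ?_, ?_⟩
  · simp [colVec, Matrix.mulVec, dotProduct, Pi.single_apply]
  · simpa [colVec] using congrFun h (Sum.inr j)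
  · rintro X ⟨x, hx, hX⟩ hX0 ⟨hsub, hnsub⟩
    have hT : ∀ k, k ≠ j → x (Sum.inr k) = 0 := by
      intro k hk
      by_contra hne
      have hmem : Sum.inr k ∈ supp X := by simpa [supp, hX] using hne
      simpa [supp, colVec, hk] using hsub hmem
    have hS : ∀ i, x (Sum.inl i) = M i j * x (Sum.inr j) := by
      intro i
      rw [hx i, Matrix.mulVec, dotProduct]
      exact Finset.sum_eq_single j (fun k _ hk => by simp [hT k hk]) (by simp)
    by_cases hj : x (Sum.inr j) = 0
    · apply hX0
      funext e
      rcases e with i | k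
      · simp [hX, hS, hj]
      · by_cases hk : k = j
        · simp [hX, hk, hj]
        · simp [hX, hT k hk]
    · apply hnsub
      rintro (i | k) he
      · simp only [supp, colVec, Set.mem_ofPred_eq, Sum.elim_inl, ne_eq, sign_eq_zero_iff] at he
        simp [supp, hX, hS, hj, he]
      · by_cases hk : k = j
        · simp [supp, hX, hk, hj]
        · simp [supp, colVec, hk] at he

/-- An LCP-realizable oriented matroid is a Z-matroid iff its realization
matrix is a Z-matrix. -/
theorem zmatroid_iff_zmatrix {n : ℕ} (M : Matrix (Fin n) (Fin n) ℝ)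
    (V : Set (Fin n ⊕ Fin n → SignType)) (hreal : Realizes M V) :
    IsZMatroid Sum.swap (Set.range Sum.inl) (Set.range Sum.inr) V ↔ IsZMatrix M := by
  constructor
  · rintro ⟨-, hZ⟩ i j hij
    by_contra! hpos
    have h := hZ _ (isCircuit_colVec M V hreal j) ?_ (Sum.inl i) ⟨i, rfl⟩
      (sign_pos hpos)
    · simp [colVec, hij] at h
    · rintro _ ⟨k, rfl⟩
      by_cases hk : k = j <;> simp [colVec, hk]
  · intro hM
    subst hreal
    refine ⟨isOM_sign_submodule (lcpKernel M), ?_⟩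
    rintro C ⟨⟨x, hx, hC⟩, -, -⟩ hT _ ⟨i, rfl⟩ hi
    have hT' : ∀ k, 0 ≤ x (Sum.inr k) := fun k => by
      simpa [hC] using hT (Sum.inr k) ⟨k, rfl⟩
    rw [hC, sign_eq_one_iff, hx i, Matrix.mulVec, dotProduct] at hi
    rw [Sum.swap_inl, hC, sign_eq_one_iff]
    refine (hT' i).lt_of_ne fun h0 => hi.not_ge (Finset.sum_nonpos fun k _ => ?_)
    by_cases hk : i = k
    · simp [← hk, ← h0]
    · exact mul_nonpos_of_nonpos_of_nonneg (hM i k hk) (hT' k)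
end

section
/- Let 𝒱 be a Z-matroid on E_{2n} in which S is a basis, let e ∈ T, and let C = C(S,e) be the fundamental circuit of e with respect to S. Then C e = +1, C f = 0 for every f ∈ T with f ≠ e, and C f ≤ 0 for every f ∈ S with f ≠ ē. -/
/-- Sign pattern of the fundamental circuit C(S,e), e ∈ T, in a Z-matroid
in which S is a basis. -/
theorem zmatroid_fundamental_circuit {E : Type*} {n : ℕ} (bar : E → E)
    (S T : Set E) (hG : IsGround bar S T n)
    (V : Set (E → SignType)) (hZ : IsZMatroid bar S T V) (hbasis : IsBasis V S)
    (e : E) (he : e ∈ T)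
    (C : E → SignType) (hC : IsCircuit V C) (hCsupp : supp C ⊆ S ∪ {e})
    (hCe : C e = 1) :
    C e = 1 ∧ (∀ f ∈ T, f ≠ e → C f = 0) ∧ ∀ f ∈ S, f ≠ bar e → C f ≤ 0 := by
  have hT : ∀ f ∈ T, f ≠ e → C f = 0 := by
    intro f hf hfe
    by_contra h
    rcases hCsupp h with hS | hfe'
    · exact Set.disjoint_left.mp hG.disj hS hf
    · exact hfe hfe'
  refine ⟨hCe, hT, fun f hf hfe => ?_⟩
  have hnonneg : ∀ g ∈ T, 0 ≤ C g := by
    intro g hg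
    by_cases h : g = e
    · rw [h, hCe]
      decide
    · exact (hT g hg h).ge
  by_contra hpos
  have hf1 : C f = 1 := by
    revert hpos
    generalize C f = s
    revert s
    decide
  have hbar := hZ.2 C hC hnonneg f hf hf1
  have hbe : bar f ≠ e := fun h => hfe (by rw [← h, hG.inv])
  rw [hT _ (hG.barS f hf) hbe] at hbar
  exact absurd hbar (by decide)
end
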